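/- Let T > 0 and let h : [0,T] × ℝ → ℝ be jointly Lipschitz continuous and satisfy |h(t,x) − h(t,x′)| ≤ |x − x′| for all t ∈ [0,T] and x, x′ ∈ ℝ. Suppose that for almost every (t,x) ∈ (0,T) × ℝ the partial derivatives ∂_t h(t,x) and ∂_x h(t,x) exist and satisfy ∂_t h(t,x) = −(1/2)·(1 − (∂_x h(t,x))²). Then for all t₀ ≥ 0 and t ≥ 0 with t₀ + t ≤ T and all x, x̂ ∈ ℝ one has h(t₀, x̂) + p(t, x − x̂) ≤ h(t₀ + t, x) ≤ h(t₀, x); equivalently, (HL_t h(t₀,·))(x) ≤ h(t₀+t, x) ≤ h(t₀, x), i.e. h satisfies the Hopf–Lax condition. -/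

import Mathlib

open MeasureTheory

/-- The (shifted) parabola `p(t,x)`: for `t > 0`, `p(t,x) = -t/2 - x²/(2t)` when `|x| ≤ t`
and `p(t,x) = -|x|` otherwise; also `p(0,x) = -|x|`. -/
noncomputable def parab (t x : ℝ) : ℝ :=
  if 0 < t ∧ |x| ≤ t then -t / 2 - x ^ 2 / (2 * t) else -|x|

/-!
By Rademacher's theorem a Lipschitz solution `h` is differentiable almost everywhere, so by Fubini
it is absolutely continuous and satisfies the equation at almost every time along almost every
translate of a line of velocity `v`. There `d/ds h = ∂ₜh + v·∂ₓh ≥ -(1 + ‖v‖²)/2`, by Young's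
inequality. Integrating, and passing to all lines of velocity `v` by continuity, gives a lower bound
for `h` with slope `-(1 + ‖v‖²)/2`. Inside the light cone `‖x - x̂‖ < t`, the velocity
`(x - x̂)/t` yields the parabola; outside it, one moves at unit speed towards `x` and covers the
remaining distance by the spatial Lipschitz bound. The upper bound is the case `v = 0`, where
`∂ₜh ≤ 0`.
-/

open Set

section Parabola

lemma parab_abs (t x : ℝ) : parab t |x| = parab t x := by
  simp only [parab, abs_abs, sq_abs]

lemma parab_of_abs_lt {t x : ℝ} (hx : |x| < t) : parab t x = -t / 2 - x ^ 2 / (2 * t) :=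
  if_pos ⟨(abs_nonneg x).trans_lt hx, hx.le⟩

lemma parab_of_le_abs {t x : ℝ} (hx : t ≤ |x|) : parab t x = -|x| := by
  unfold parab
  split_ifs with ht
  · obtain rfl : |x| = t := le_antisymm ht.2 hx
    rw [← sq_abs x]
    field_simp [ht.1.ne']
    ring
  · rfl

variable {E : Type*} [SeminormedAddCommGroup E] [NormedSpace ℝ E]

lemma norm_add_smul_inv_norm_smul_sub {x y : E} {t : ℝ} (ht : 0 ≤ t) (htx : t ≤ ‖x - y‖) :
    ‖y + t • (‖x - y‖⁻¹ • (x - y)) - x‖ = ‖x - y‖ - t := by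
  have hcollinear : y + t • (‖x - y‖⁻¹ • (x - y)) - x = (t / ‖x - y‖ - 1) • (x - y) := by module
  rw [hcollinear, norm_smul,
    Real.norm_of_nonpos (sub_nonpos.2 (div_le_one_of_le₀ htx (norm_nonneg _)))]
  rcases eq_or_ne ‖x - y‖ 0 with h₀ | h₀
  · rw [h₀] at htx ⊢
    linarith
  · field_simp
    ring

lemma add_parab_norm_le_of_velocity_bound {f g : E → ℝ} (hg : LipschitzWith 1 g) {t : ℝ}
    (ht : 0 ≤ t) {y : E}
    (hfg : ∀ v : E, ‖v‖ ≤ 1 → f y - (1 + ‖v‖ ^ 2) / 2 * t ≤ g (y + t • v)) (x : E) :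
    f y + parab t ‖x - y‖ ≤ g x := by
  rcases lt_or_ge ‖x - y‖ t with hxt | htx
  · have ht₀ : 0 < t := (norm_nonneg _).trans_lt hxt
    have hv : ‖t⁻¹ • (x - y)‖ = ‖x - y‖ / t := by
      rw [norm_smul, norm_inv, Real.norm_of_nonneg ht, inv_mul_eq_div]
    have hparab : parab t ‖x - y‖ = -((1 + (‖x - y‖ / t) ^ 2) / 2 * t) := by
      rw [parab_of_abs_lt (by rwa [abs_norm])]
      field_simp
      ring
    have hgx := hfg (t⁻¹ • (x - y)) (hv ▸ (div_le_one ht₀).2 hxt.le)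
    rw [hv, smul_inv_smul₀ ht₀.ne', add_sub_cancel] at hgx
    rwa [hparab, ← sub_eq_add_neg]
  · set v : E := ‖x - y‖⁻¹ • (x - y)
    have hv : ‖v‖ ≤ 1 := by
      rw [norm_smul, norm_inv, norm_norm]
      exact inv_mul_le_one
    have hgx : g (y + t • v) - g x ≤ ‖x - y‖ - t :=
      calc g (y + t • v) - g x ≤ ‖y + t • v - x‖ :=
            (le_abs_self _).trans (by simpa using hg.norm_sub_le (y + t • v) x)
        _ = ‖x - y‖ - t := norm_add_smul_inv_norm_smul_sub ht htx
    rw [parab_of_le_abs (by rwa [abs_norm]), abs_norm]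
    have hslope : (1 + ‖v‖ ^ 2) / 2 * t ≤ t := by
      nlinarith [pow_le_one₀ (n := 2) (norm_nonneg v) hv]
    linarith [hfg v hv]

end Parabola

lemma mul_sub_le_sub_of_ae_le_deriv {f : ℝ → ℝ} {a b c : ℝ}
    (hf : AbsolutelyContinuousOnInterval f a b) (hab : a ≤ b)
    (hc : ∀ᵐ s, s ∈ Ioo a b → c ≤ deriv f s) : c * (b - a) ≤ f b - f a := by
  have hc' : (fun _ ↦ c) ≤ᵐ[volume.restrict (Icc a b)] deriv f := by
    rw [← restrict_Ioo_eq_restrict_Icc]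
    exact (ae_restrict_iff' measurableSet_Ioo).2 hc
  calc c * (b - a) = ∫ _ in a..b, c := by
        rw [intervalIntegral.integral_const, smul_eq_mul, mul_comm]
    _ ≤ ∫ s in a..b, deriv f s :=
        intervalIntegral.integral_mono_ae_restrict hab intervalIntegrable_const
          hf.intervalIntegrable_deriv hc'
    _ = f b - f a := hf.integral_deriv_eq_sub

lemma measurePreserving_prod_add_comp_fst {α G : Type*} [MeasurableSpace α] [MeasurableSpace G]
    [Add G] [MeasurableAdd₂ G] (μ : Measure α) [SFinite μ] (ν : Measure G) [SFinite ν]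
    [ν.IsAddRightInvariant] {w : α → G} (hw : Measurable w) :
    MeasurePreserving (fun q : α × G ↦ (q.1, q.2 + w q.1)) (μ.prod ν) (μ.prod ν) :=
  (MeasurePreserving.id μ).skew_product (g := fun a y ↦ y + w a)
    (measurable_snd.add (hw.comp measurable_fst))
    (ae_of_all μ fun a ↦ map_add_right_eq_self ν (w a))

lemma ae_differentiableAt_of_mem_interior {E F : Type*} [NormedAddCommGroup E] [NormedSpace ℝ E]
    [FiniteDimensional ℝ E] [MeasurableSpace E] [BorelSpace E] [NormedAddCommGroup F]
    [NormedSpace ℝ F] [FiniteDimensional ℝ F] {μ : Measure E} [μ.IsAddHaarMeasure] {K : NNReal}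
    {f : E → F} {s : Set E} (hf : LipschitzOnWith K f s) :
    ∀ᵐ x ∂μ, x ∈ interior s → DifferentiableAt ℝ f x := by
  filter_upwards [hf.ae_differentiableWithinAt_of_mem (μ := μ)] with x hx hxs
  exact (hx (interior_subset hxs)).differentiableAt (mem_interior_iff_mem_nhds.1 hxs)

lemma eq_coprod_of_hasFDerivAt_partial {𝕜 E F G : Type*} [NontriviallyNormedField 𝕜]
    [NormedAddCommGroup E] [NormedSpace 𝕜 E] [NormedAddCommGroup F] [NormedSpace 𝕜 F]
    [NormedAddCommGroup G] [NormedSpace 𝕜 G] {f : E × F → G} {p : E × F} {L : E × F →L[𝕜] G}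
    {L₁ : E →L[𝕜] G} {L₂ : F →L[𝕜] G} (hL : HasFDerivAt f L p)
    (h₁ : HasFDerivAt (fun x ↦ f (x, p.2)) L₁ p.1) (h₂ : HasFDerivAt (fun y ↦ f (p.1, y)) L₂ p.2) :
    L = L₁.coprod L₂ := by
  have hfst : L.comp (.inl 𝕜 E F) = L₁ :=
    (hL.comp p.1 (hasFDerivAt_prodMk_left p.1 p.2)).unique h₁
  have hsnd : L.comp (.inr 𝕜 E F) = L₂ :=
    (hL.comp p.2 (hasFDerivAt_prodMk_right p.1 p.2)).unique h₂
  rw [← hfst, ← hsnd, ContinuousLinearMap.coprod_comp_inl_inr]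

lemma neg_one_add_sq_norm_div_two_le {E : Type*} [SeminormedAddCommGroup E] [NormedSpace ℝ E]
    (ℓ : E →L[ℝ] ℝ) (v : E) : -((1 + ‖v‖ ^ 2) / 2) ≤ -(1 / 2) * (1 - ‖ℓ‖ ^ 2) + ℓ v := by
  have hℓv : -(‖ℓ‖ * ‖v‖) ≤ ℓ v := (abs_le.1 (ℓ.le_opNorm v)).1
  linarith [two_mul_le_add_sq ‖ℓ‖ ‖v‖]

lemma burgers_rate_nonpos_of_lipschitzWith_one {E : Type*} [NormedAddCommGroup E]
    [NormedSpace ℝ E] {u : E → ℝ} {ℓ : E →L[ℝ] ℝ} {x : E} (hu : LipschitzWith 1 u)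
    (hℓ : HasFDerivAt u ℓ x) : -(1 / 2) * (1 - ‖ℓ‖ ^ 2) ≤ 0 := by
  linarith [pow_le_one₀ (n := 2) (norm_nonneg ℓ) (by simpa using hℓ.le_of_lipschitz hu)]

section Strip

variable {E : Type*} [NormedAddCommGroup E] [NormedSpace ℝ E]

lemma hasDerivAt_line (a : ℝ) (y v : E) (s : ℝ) :
    HasDerivAt (fun s ↦ (s, y + (s - a) • v)) ((1 : ℝ), v) s := by
  simpa using (hasDerivAt_id s).prodMk ((((hasDerivAt_id s).sub_const a).smul_const v).const_add y)

lemma lipschitzWith_line (a : ℝ) (y v : E) :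
    LipschitzWith ‖((1 : ℝ), v)‖₊ (fun s ↦ (s, y + (s - a) • v)) :=
  lipschitzWith_of_nnnorm_deriv_le (fun s ↦ (hasDerivAt_line a y v s).differentiableAt)
    fun s ↦ (congrArg nnnorm (hasDerivAt_line a y v s).deriv).le

variable [FiniteDimensional ℝ E] [MeasurableSpace E] [BorelSpace E] {μ : Measure E}

lemma ae_ae_along_line [SFinite μ] [μ.IsAddRightInvariant] {P : ℝ × E → Prop}
    (hP : ∀ᵐ p ∂(volume : Measure ℝ).prod μ, P p) (a : ℝ) (v : E) :
    ∀ᵐ y ∂μ, ∀ᵐ s, P (s, y + (s - a) • v) := by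
  have hshear : MeasurePreserving (fun q : E × ℝ ↦ (q.2, q.1 + (q.2 - a) • v))
      (μ.prod volume) ((volume : Measure ℝ).prod μ) :=
    (measurePreserving_prod_add_comp_fst volume μ (w := fun s ↦ (s - a) • v)
      (by fun_prop)).comp Measure.measurePreserving_swap
  exact Measure.ae_ae_of_ae_prod (hshear.quasiMeasurePreserving.ae hP)

variable [μ.IsAddHaarMeasure] {K : NNReal} {a b : ℝ}

lemma mul_sub_le_sub_along_line {f : ℝ × E → ℝ} {c : ℝ}
    (hf : LipschitzOnWith K f (Icc a b ×ˢ univ)) (hab : a ≤ b) (v : E)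
    (hc : ∀ᵐ p ∂(volume : Measure ℝ).prod μ, p ∈ Ioo a b ×ˢ univ →
      ∀ L : ℝ × E →L[ℝ] ℝ, HasFDerivAt f L p → c ≤ L (1, v)) (y : E) :
    c * (b - a) ≤ f (b, y + (b - a) • v) - f (a, y) := by
  have hline : ∀ᵐ y ∂μ, ∀ᵐ s, s ∈ Ioo a b →
      c ≤ deriv (fun s ↦ f (s, y + (s - a) • v)) s := by
    filter_upwards [ae_ae_along_line (hc.and (ae_differentiableAt_of_mem_interior hf)) a v]
      with y hy
    filter_upwards [hy] with s ⟨hcs, hds⟩ hs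
    have hL := (hds (by simpa [interior_prod_eq] using hs)).hasFDerivAt
    exact (hcs ⟨hs, mem_univ _⟩ _ hL).trans_eq
      (hL.comp_hasDerivAt s (hasDerivAt_line a y v s)).deriv.symm
  have hae : ∀ᵐ y ∂μ, c * (b - a) ≤ f (b, y + (b - a) • v) - f (a, y) := by
    filter_upwards [hline] with y hy
    have hlip := hf.comp ((lipschitzWith_line a y v).lipschitzOnWith (s := uIcc a b))
      fun s hs ↦ ⟨uIcc_of_le hab ▸ hs, mem_univ _⟩
    simpa using mul_sub_le_sub_of_ae_le_deriv hlip.absolutelyContinuousOnInterval hab hy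
  have hslice : ∀ s ∈ Icc a b, Continuous fun y ↦ f (s, y + (s - a) • v) := fun s hs ↦
    hf.continuousOn.comp_continuous (by fun_prop) fun y ↦ ⟨hs, mem_univ _⟩
  have hclosed : IsClosed {y | c * (b - a) ≤ f (b, y + (b - a) • v) - f (a, y)} :=
    isClosed_le continuous_const
      ((hslice b (right_mem_Icc.2 hab)).sub (by simpa using hslice a (left_mem_Icc.2 hab)))
  exact hclosed.closure_subset (Measure.dense_of_ae hae y)

variable {h : ℝ → E → ℝ} (hLip : LipschitzOnWith K (fun p : ℝ × E ↦ h p.1 p.2) (Icc a b ×ˢ univ))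

include hLip

lemma sub_mul_le_of_burgers_supersolution (hab : a ≤ b)
    (hsuper : ∀ᵐ p ∂(volume : Measure ℝ).prod μ, p ∈ Ioo a b ×ˢ univ →
      ∃ (dt : ℝ) (dx : E →L[ℝ] ℝ), HasDerivAt (fun s ↦ h s p.2) dt p.1 ∧
        HasFDerivAt (h p.1) dx p.2 ∧ -(1 / 2) * (1 - ‖dx‖ ^ 2) ≤ dt) (y v : E) :
    h a y - (1 + ‖v‖ ^ 2) / 2 * (b - a) ≤ h b (y + (b - a) • v) := by
  have hline := mul_sub_le_sub_along_line (c := -((1 + ‖v‖ ^ 2) / 2)) hLip hab v (by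
    filter_upwards [hsuper] with p hp hpm L hL
    obtain ⟨dt, dx, ht, hx, hle⟩ := hp hpm
    rw [eq_coprod_of_hasFDerivAt_partial hL ht.hasFDerivAt hx]
    simpa using (neg_one_add_sq_norm_div_two_le dx v).trans (add_le_add_left hle (dx v))) y
  linarith

lemma le_of_ae_deriv_time_nonpos (hab : a ≤ b)
    (hdt : ∀ᵐ p ∂(volume : Measure ℝ).prod μ, p ∈ Ioo a b ×ˢ univ →
      ∃ dt : ℝ, HasDerivAt (fun s ↦ h s p.2) dt p.1 ∧ dt ≤ 0) (x : E) :
    h b x ≤ h a x := by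
  have hline := mul_sub_le_sub_along_line (c := 0) hLip.neg hab 0 (by
    filter_upwards [hdt] with p hp hpm L hL
    obtain ⟨dt, ht, hle⟩ := hp hpm
    have hLt : HasDerivAt (fun s ↦ -h s p.2) (L (1, 0)) p.1 :=
      HasFDerivAt.comp_hasDerivAt (f := fun s ↦ (s, p.2)) p.1 hL
        ((hasDerivAt_id p.1).prodMk (hasDerivAt_const p.1 p.2))
    rw [hLt.unique ht.fun_neg]
    linarith) x
  simpa using hline

end Strip

theorem weak_solution_satisfies_hopfLax_condition_general {E : Type*} [NormedAddCommGroup E]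
    [NormedSpace ℝ E] [FiniteDimensional ℝ E] [MeasurableSpace E] [BorelSpace E] {μ : Measure E}
    [μ.IsAddHaarMeasure] {T : ℝ} {h : ℝ → E → ℝ}
    (hLip : ∃ K : NNReal, LipschitzOnWith K (fun p : ℝ × E ↦ h p.1 p.2) (Icc 0 T ×ˢ univ))
    (hSpace : ∀ t ∈ Icc 0 T, LipschitzWith 1 (h t))
    (hPDE : ∀ᵐ p ∂(volume : Measure ℝ).prod μ, p ∈ Ioo 0 T ×ˢ univ →
      ∃ (dt : ℝ) (dx : E →L[ℝ] ℝ), HasDerivAt (fun s ↦ h s p.2) dt p.1 ∧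
        HasFDerivAt (h p.1) dx p.2 ∧ dt ∈ Icc (-(1 / 2) * (1 - ‖dx‖ ^ 2)) 0)
    {t₀ t : ℝ} (ht₀ : 0 ≤ t₀) (ht : 0 ≤ t) (htT : t₀ + t ≤ T) (x xh : E) :
    h t₀ xh + parab t ‖x - xh‖ ≤ h (t₀ + t) x ∧ h (t₀ + t) x ≤ h t₀ x := by
  obtain ⟨K, hK⟩ := hLip
  have hle : t₀ ≤ t₀ + t := le_add_of_nonneg_right ht
  have hK' : LipschitzOnWith K (fun p : ℝ × E ↦ h p.1 p.2) (Icc t₀ (t₀ + t) ×ˢ univ) :=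
    hK.mono (prod_mono_left (Icc_subset_Icc ht₀ htT))
  have hPDE' := hPDE.mono fun p hp hpm ↦ hp (prod_mono_left (Ioo_subset_Ioo ht₀ htT) hpm)
  constructor
  · refine add_parab_norm_le_of_velocity_bound (hSpace _ ⟨ht₀.trans hle, htT⟩) ht (fun v _ ↦ ?_) x
    have hv := sub_mul_le_of_burgers_supersolution hK' hle (hPDE'.mono fun p hp hpm ↦
      let ⟨dt, dx, hdt, hdx, hb⟩ := hp hpm; ⟨dt, dx, hdt, hdx, hb.1⟩) xh v
    rwa [add_sub_cancel_left] at hv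
  · exact le_of_ae_deriv_time_nonpos hK' hle (hPDE'.mono fun p hp hpm ↦
      let ⟨dt, _, hdt, _, hb⟩ := hp hpm; ⟨dt, hdt, hb.2⟩) x

/-- Every jointly Lipschitz function `h` on `[0,T] × ℝ` that is `1`-Lipschitz in space and
solves `∂ₜ h = -(1/2)(1 - (∂ₓ h)²)` almost everywhere on `(0,T) × ℝ` satisfies the
Hopf–Lax condition. -/
theorem weak_solution_satisfies_hopfLax_condition
    (T : ℝ) (hT : 0 < T) (h : ℝ → ℝ → ℝ)
    (hLip : ∃ K : NNReal, LipschitzOnWith K (fun p : ℝ × ℝ => h p.1 p.2)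
      (Set.Icc 0 T ×ˢ Set.univ))
    (hSpace : ∀ t ∈ Set.Icc (0 : ℝ) T, LipschitzWith 1 (h t))
    (hPDE : ∀ᵐ p : ℝ × ℝ, p ∈ Set.Ioo (0 : ℝ) T ×ˢ (Set.univ : Set ℝ) →
      ∃ dt dx : ℝ, HasDerivAt (fun s => h s p.2) dt p.1 ∧
        HasDerivAt (fun y => h p.1 y) dx p.2 ∧ dt = -(1 / 2) * (1 - dx ^ 2)) :
    ∀ t₀ t : ℝ, 0 ≤ t₀ → 0 ≤ t → t₀ + t ≤ T → ∀ x xh : ℝ,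
      h t₀ xh + parab t (x - xh) ≤ h (t₀ + t) x ∧ h (t₀ + t) x ≤ h t₀ x := by
  simp only [← parab_abs _ (_ - _)]
  intro t₀ t ht₀ ht htT
  refine weak_solution_satisfies_hopfLax_condition_general (μ := volume) hLip hSpace ?_ ht₀ ht htT
  filter_upwards [hPDE] with p hp hpm
  obtain ⟨_, dx, hdt, hdx, rfl⟩ := hp hpm
  have hrate := burgers_rate_nonpos_of_lipschitzWith_one
    (hSpace p.1 (Ioo_subset_Icc_self hpm.1)) hdx.hasFDerivAt
  exact ⟨_, _, hdt, hdx.hasFDerivAt, by simp, by simpa using hrate⟩
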